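/- arXiv:1901.06872 — 3 statements merged into one kernel-verified Lean document; each statement's English description precedes it below -/
import Mathlib

section
/- For every integer m ≥ 2 there exists a real number α_m with 2/m < α_m < 12/m and 𝐩_m(α_m) = 0 such that for every real α ≥ α_m there exists γ with 0 < γ < 1 − 1/(m+α) and P_{m,α}(γ) ≥ 0. -/
/-- The quartic polynomial `P_{m,α}(γ)` from the analysis of the lower solution. -/
noncomputable def Pquartic (m : ℕ) (α : ℝ) (γ : ℝ) : ℝ :=
  ((m : ℝ) + α) ^ 3 * γ ^ 4
    + (-(((m : ℝ) + α) ^ 2 * ((m : ℝ) + α + 1))) * γ ^ 3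
    + (((m : ℝ) + α) * (2 * (m : ℝ) + 6 * α - 4 * (m : ℝ) * α - 1)) * γ ^ 2
    + (4 * (m : ℝ) ^ 2 * α + 4 * α ^ 2 * (m : ℝ) - 4 * α ^ 2 - 5 * α - (m : ℝ) + 1) * γ
    + (-(8 * ((m : ℝ) - 1) * α))

/-- The degree-8 polynomial `𝐩_m(α)` whose unique positive root is `α_m`. -/
noncomputable def pm (m : ℕ) (α : ℝ) : ℝ :=
  16 * ((m : ℝ) - 1) ^ 2 * α ^ 8
    - 4 * ((m : ℝ) - 1) * (8 * (m : ℝ) ^ 2 + 3) * α ^ 7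
    - (16 * (m : ℝ) ^ 4 - 256 * (m : ℝ) ^ 3 + 584 * (m : ℝ) ^ 2 - 496 * (m : ℝ) + 153) * α ^ 6
    + 2 * (32 * (m : ℝ) ^ 5 - 224 * (m : ℝ) ^ 4 + 1238 * (m : ℝ) ^ 3 - 2738 * (m : ℝ) ^ 2
        + 2545 * (m : ℝ) - 852) * α ^ 5
    - ((m : ℝ) - 1) * (16 * (m : ℝ) ^ 5 + 48 * (m : ℝ) ^ 4 - 1712 * (m : ℝ) ^ 3
        + 6672 * (m : ℝ) ^ 2 - 4321 * (m : ℝ) - 641) * α ^ 4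
    - 2 * (16 * (m : ℝ) ^ 7 - 208 * (m : ℝ) ^ 6 + 250 * (m : ℝ) ^ 5 + 2302 * (m : ℝ) ^ 4
        - 3214 * (m : ℝ) ^ 3 - 588 * (m : ℝ) ^ 2 + 1566 * (m : ℝ) - 123) * α ^ 3
    + (16 * (m : ℝ) ^ 8 - 192 * (m : ℝ) ^ 7 + 984 * (m : ℝ) ^ 6 - 2864 * (m : ℝ) ^ 5
        + 1001 * (m : ℝ) ^ 4 + 4184 * (m : ℝ) ^ 3 - 3870 * (m : ℝ) ^ 2 + 794 * (m : ℝ) - 52) * α ^ 2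
    - 2 * ((m : ℝ) - 1) * (22 * (m : ℝ) ^ 6 - 148 * (m : ℝ) ^ 5 + 363 * (m : ℝ) ^ 4
        - 381 * (m : ℝ) ^ 3 + 185 * (m : ℝ) ^ 2 - 60 * (m : ℝ) + 2) * α
    - ((m : ℝ) - 2) ^ 3 * ((m : ℝ) - 1) ^ 2 * (m : ℝ)

/-!
With `x = (m + α) γ`, the quartic becomes `(m + α)⁻¹ q_α(x)` for a monic quartic `q_α`, and `γ`
ranges over `(0, 1 - 1 / (m + α))` exactly when `x` ranges over `(0, m - 1 + α)`. The maximum of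
`q_α` on `[0, m - 1 + α]` depends continuously on `α`, is negative at `α = 2 / m` and positive at
`α = 12 / m`, so it vanishes for some `α_m` in between. At `α_m` the maximum is attained in the open
interval, hence at a double root of `q_{α_m}`; the discriminant of `q_α` in `x` equals
`16 (m - 1) α 𝐩_m(α)`, so `𝐩_m(α_m) = 0`. Finally, `q_α(x) ≥ 0` persists when `α` increases
with `x` fixed, so the double root serves all `α ≥ α_m`.
-/

open Set

/-- The quartic `(m + α) P_{m,α}(x / (m + α))`, which is monic in `x`. It is written so as to
exhibit the distance `m - 1 + α - x` of `x` to the right end of the interval `(0, m - 1 + α)`. -/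
noncomputable def scaledQuartic (m α x : ℝ) : ℝ :=
  -(x * (x - 1) ^ 2 * (m - 1 + α - x)) + 4 * (α * (m - 1)) * ((m - 1 + α - x) * (x - 2) - 2)

/-- The discriminant of `a x⁴ + b x³ + c x² + d x + e` multiplied by `27`, expressed through the
classical invariants `I` and `J` of the binary quartic as `4 I³ - J²`. -/
def quarticDiscr {R : Type*} [CommRing R] (a b c d e : R) : R :=
  4 * (12 * a * e - 3 * b * d + c ^ 2) ^ 3
    - (72 * a * c * e + 9 * b * c * d - 27 * a * d ^ 2 - 27 * b ^ 2 * e - 2 * c ^ 3) ^ 2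

theorem quarticDiscr_eq_zero_of_double_root {R : Type*} [CommRing R] {a b c d e x : R}
    (h : a * x ^ 4 + b * x ^ 3 + c * x ^ 2 + d * x + e = 0)
    (h' : 4 * a * x ^ 3 + 3 * b * x ^ 2 + 2 * c * x + d = 0) :
    quarticDiscr a b c d e = 0 := by
  obtain rfl : d = -(4 * a * x ^ 3 + 3 * b * x ^ 2 + 2 * c * x) := by linear_combination h'
  obtain rfl : e = 3 * a * x ^ 4 + 2 * b * x ^ 3 + c * x ^ 2 := by linear_combination h
  unfold quarticDiscr
  ring

theorem hasDerivAt_quartic {𝕜 : Type*} [NontriviallyNormedField 𝕜] (a b c d e x : 𝕜) :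
    HasDerivAt (fun t => a * t ^ 4 + b * t ^ 3 + c * t ^ 2 + d * t + e)
      (4 * a * x ^ 3 + 3 * b * x ^ 2 + 2 * c * x + d) x := by
  refine HasDerivAt.congr_deriv (((((hasDerivAt_pow 4 x).const_mul a).add
    ((hasDerivAt_pow 3 x).const_mul b)).add ((hasDerivAt_pow 2 x).const_mul c)).add
    ((hasDerivAt_id x).const_mul d) |>.add_const e) ?_
  push_cast
  ring

theorem exists_isMaxOn_eq_of_lt_of_lt {A X B : Type*}
    [ConditionallyCompleteLinearOrder A] [TopologicalSpace A] [OrderTopology A] [DenselyOrdered A]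
    [TopologicalSpace X]
    [ConditionallyCompleteLinearOrder B] [TopologicalSpace B] [OrderTopology B]
    {K : Set X} (hK : IsCompact K) {f : A → X → B} (hf : Continuous ↿f) {a b : A} (hab : a ≤ b)
    {v : B} (ha : ∀ x ∈ K, f a x < v) (hb : ∃ x ∈ K, v < f b x) :
    ∃ c ∈ Ioo a b, ∃ x ∈ K, f c x = v ∧ IsMaxOn (f c) K x := by
  have hne : K.Nonempty := hb.imp fun _ hx => hx.1
  have hcont (c : A) : ContinuousOn (f c) K := (hf.uncurry_left c).continuousOn
  have hsup_a : sSup (f a '' K) < v := by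
    obtain ⟨x, hx, hsup⟩ := hK.exists_sSup_image_eq hne (hcont a)
    exact hsup ▸ ha x hx
  have hsup_b : v < sSup (f b '' K) := by
    obtain ⟨x, hx, hv⟩ := hb
    exact hv.trans_le (le_csSup (hK.bddAbove_image (hcont b)) (mem_image_of_mem _ hx))
  obtain ⟨c, hc, hsup_c⟩ :=
    intermediate_value_Ioo hab (hK.continuous_sSup hf).continuousOn ⟨hsup_a, hsup_b⟩
  obtain ⟨x, hx, hmax, hle⟩ := hK.exists_sSup_image_eq_and_ge hne (hcont c)
  exact ⟨c, hc, x, hx, hmax.symm.trans hsup_c, hle⟩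

theorem exists_isMaxOn_Icc_eq_of_lt_of_lt {f : ℝ → ℝ → ℝ} (hf : Continuous ↿f) {L : ℝ → ℝ}
    (hL : Continuous L) {a b v : ℝ} (hab : a ≤ b) (hL0 : ∀ c ∈ Icc a b, 0 ≤ L c)
    (ha : ∀ x ∈ Icc 0 (L a), f a x < v) (hb : ∃ x ∈ Icc 0 (L b), v < f b x) :
    ∃ c ∈ Ioo a b, ∃ x ∈ Icc 0 (L c), f c x = v ∧ IsMaxOn (f c) (Icc 0 (L c)) x := by
  have hcont : Continuous ↿fun c t => f c (t * L c) :=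
    hf.comp (continuous_fst.prodMk (continuous_snd.mul (hL.comp continuous_fst)))
  have himage (c : ℝ) (hc : c ∈ Icc a b) : Icc 0 (L c) = (· * L c) '' Icc 0 1 := by
    rw [image_mul_right_Icc zero_le_one (hL0 c hc), zero_mul, one_mul]
  rw [himage a (left_mem_Icc.2 hab), forall_mem_image] at ha
  rw [himage b (right_mem_Icc.2 hab), exists_mem_image] at hb
  obtain ⟨c, hc, t, ht, hv, hmax⟩ := exists_isMaxOn_eq_of_lt_of_lt isCompact_Icc hcont hab ha hb
  refine ⟨c, hc, t * L c, ?_⟩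
  rw [himage c (Ioo_subset_Icc_self hc)]
  exact ⟨mem_image_of_mem _ ht, hv, isMaxOn_iff.2 (forall_mem_image.2 hmax)⟩

section scaledQuartic

variable {m α β x : ℝ}

theorem scaledQuartic_eq (m α x : ℝ) :
    scaledQuartic m α x = x ^ 4 + -(m + α + 1) * x ^ 3
      + (2 * m + 6 * α - 4 * m * α - 1) * x ^ 2
      + (4 * m ^ 2 * α + 4 * α ^ 2 * m - 4 * α ^ 2 - 5 * α - m + 1) * x
      + -(8 * (m - 1) * α * (m + α)) := by
  unfold scaledQuartic
  ring

theorem Pquartic_div (n : ℕ) (h : (n : ℝ) + α ≠ 0) (x : ℝ) :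
    Pquartic n α (x / (n + α)) = scaledQuartic n α x / (n + α) := by
  rw [scaledQuartic_eq]
  unfold Pquartic
  field_simp

theorem deriv_scaledQuartic (m α x : ℝ) :
    deriv (scaledQuartic m α) x = 4 * x ^ 3 + 3 * -(m + α + 1) * x ^ 2
      + 2 * (2 * m + 6 * α - 4 * m * α - 1) * x
      + (4 * m ^ 2 * α + 4 * α ^ 2 * m - 4 * α ^ 2 - 5 * α - m + 1) := by
  have h := hasDerivAt_quartic 1 (-(m + α + 1)) (2 * m + 6 * α - 4 * m * α - 1)
    (4 * m ^ 2 * α + 4 * α ^ 2 * m - 4 * α ^ 2 - 5 * α - m + 1) (-(8 * (m - 1) * α * (m + α))) x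
  simp only [one_mul, mul_one, ← scaledQuartic_eq] at h
  exact h.deriv

theorem two_le_mul_of_scaledQuartic_nonneg (hm : 1 < m) (hα : 0 < α) (hx : x ∈ Icc 0 (m - 1 + α))
    (h : 0 ≤ scaledQuartic m α x) : 2 ≤ (m - 1 + α - x) * (x - 2) := by
  have hk : 0 < 4 * (α * (m - 1)) := by have := sub_pos.2 hm; positivity
  have hnonneg : 0 ≤ x * (x - 1) ^ 2 * (m - 1 + α - x) :=
    mul_nonneg (mul_nonneg hx.1 (sq_nonneg _)) (sub_nonneg.2 hx.2)
  unfold scaledQuartic at h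
  exact sub_nonneg.1 (nonneg_of_mul_nonneg_right (by linarith) hk)

theorem mem_Ioo_of_scaledQuartic_nonneg (hm : 1 < m) (hα : 0 < α) (hx : x ∈ Icc 0 (m - 1 + α))
    (h : 0 ≤ scaledQuartic m α x) : x ∈ Ioo 2 (m - 1 + α) := by
  have hpos : 0 < (m - 1 + α - x) * (x - 2) :=
    two_pos.trans_le (two_le_mul_of_scaledQuartic_nonneg hm hα hx h)
  have hx2 : 0 < x - 2 := pos_of_mul_pos_right hpos (sub_nonneg.2 hx.2)
  exact ⟨sub_pos.1 hx2, sub_pos.1 (pos_of_mul_pos_left hpos hx2.le)⟩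

theorem scaledQuartic_neg (hm : 1 < m) (hα : 0 < α) (hαm : α * (m - 1) ≤ 2)
    (hx : x ∈ Icc 0 (m - 1 + α)) : scaledQuartic m α x < 0 := by
  by_contra! h
  have hs := two_le_mul_of_scaledQuartic_nonneg hm hα hx h
  have hcubic : 8 * (x - 2) ≤ x * (x - 1) ^ 2 := by
    -- `9 / 4` is close to the minimiser of the difference on `[0, ∞)`.
    nlinarith [mul_nonneg hx.1 (sq_nonneg (x - 9 / 4)), sq_nonneg (x - 9 / 4)]
  have hfst := mul_le_mul_of_nonneg_right hcubic (sub_nonneg.2 hx.2)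
  have hsnd := mul_le_mul_of_nonneg_right hαm (sub_nonneg.2 hs)
  unfold scaledQuartic at h
  linarith

theorem scaledQuartic_seven_halves_pos (hm : 2 ≤ m) : 0 < scaledQuartic m (12 / m) (7 / 2) := by
  have hm0 : 0 < m := by linarith
  have hcubic : 0 < 802 * m ^ 3 - 6297 * m ^ 2 + 16344 * m - 13824 := by
    -- `29 / 10` is close to the local minimiser of the cubic.
    nlinarith [mul_nonneg (sub_nonneg.2 hm) (sq_nonneg (m - 29 / 10))]
  have heq : scaledQuartic m (12 / m) (7 / 2)
      = (802 * m ^ 3 - 6297 * m ^ 2 + 16344 * m - 13824) / (16 * m ^ 2) := by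
    unfold scaledQuartic
    field_simp
    ring
  rw [heq]
  positivity

theorem scaledQuartic_nonneg_of_le (hm : 1 < m) (hα : 0 < α) (hx : x ∈ Icc 0 (m - 1 + α))
    (h : 0 ≤ scaledQuartic m α x) (hαβ : α ≤ β) : 0 ≤ scaledQuartic m β x := by
  have hs := sub_nonneg.2 (two_le_mul_of_scaledQuartic_nonneg hm hα hx h)
  have hy : 0 < m - 1 + α - x := sub_pos.2 (mem_Ioo_of_scaledQuartic_nonneg hm hα hx h).2
  have hy' : 0 ≤ m - 1 + β - x := by linarith
  have hm1 : 0 ≤ m - 1 := by linarith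
  have hd : 0 ≤ β - α := sub_nonneg.2 hαβ
  have hβ : 0 ≤ β := hα.le.trans hαβ
  -- The quotients of `scaledQuartic m · x` by `m - 1 + · - x` increase from `α` to `β`.
  have hcross : (m - 1 + α - x) * scaledQuartic m β x
      = (m - 1 + β - x) * scaledQuartic m α x
        + 4 * (m - 1) * (β - α)
          * ((m - 1 + β - x) * ((m - 1 + α - x) * (x - 2) - 2) + 2 * β) := by
    unfold scaledQuartic
    ring
  refine nonneg_of_mul_nonneg_right ?_ hy
  rw [hcross]
  positivity

theorem exists_double_root_scaledQuartic (hm : 2 ≤ m) :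
    ∃ α ∈ Ioo (2 / m) (12 / m), ∃ x ∈ Ioo 0 (m - 1 + α),
      scaledQuartic m α x = 0 ∧ deriv (scaledQuartic m α) x = 0 := by
  have hm0 : 0 < m := by linarith
  have hm1 : 1 < m := by linarith
  have hα0 {α : ℝ} (hα : 2 / m ≤ α) : 0 < α := lt_of_lt_of_le (by positivity) hα
  have hcont : Continuous ↿(scaledQuartic m) := by
    unfold scaledQuartic
    fun_prop
  have hneg : ∀ x ∈ Icc 0 (m - 1 + 2 / m), scaledQuartic m (2 / m) x < 0 := by
    have hprod : 2 / m * (m - 1) ≤ 2 := by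
      rw [div_mul_eq_mul_div, div_le_iff₀ hm0]
      linarith
    exact fun x => scaledQuartic_neg hm1 (hα0 le_rfl) hprod
  have hlen : 7 / 2 ≤ m - 1 + 12 / m := by
    have : m - 1 + 12 / m - 7 / 2 = ((m - 9 / 4) ^ 2 + 111 / 16) / m := by
      field_simp
      ring
    rw [← sub_nonneg, this]
    positivity
  obtain ⟨α, hα, x, hx, hroot, hmax⟩ := exists_isMaxOn_Icc_eq_of_lt_of_lt hcont
    (L := fun α => m - 1 + α) (by fun_prop) (by gcongr; norm_num)
    (fun α hα => by linarith [hα0 hα.1]) hneg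
    ⟨7 / 2, ⟨by norm_num, hlen⟩, scaledQuartic_seven_halves_pos hm⟩
  have hx' := mem_Ioo_of_scaledQuartic_nonneg hm1 (hα0 hα.1.le) hx hroot.ge
  have hx0 : 0 < x := two_pos.trans hx'.1
  exact ⟨α, hα, x, ⟨hx0, hx'.2⟩, hroot,
    (hmax.isLocalMax (Icc_mem_nhds hx0 hx'.2)).deriv_eq_zero⟩

end scaledQuartic

theorem quarticDiscr_scaledQuartic (n : ℕ) (α : ℝ) :
    quarticDiscr 1 (-(n + α + 1)) (2 * n + 6 * α - 4 * n * α - 1)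
      (4 * n ^ 2 * α + 4 * α ^ 2 * n - 4 * α ^ 2 - 5 * α - n + 1) (-(8 * (n - 1) * α * (n + α)))
      = 432 * (n - 1) * α * pm n α := by
  unfold quarticDiscr pm
  ring

theorem pm_eq_zero_of_double_root {n : ℕ} (hn : n ≠ 1) {α x : ℝ} (hα : α ≠ 0)
    (h : scaledQuartic n α x = 0) (h' : deriv (scaledQuartic n α) x = 0) : pm n α = 0 := by
  rw [scaledQuartic_eq] at h
  rw [deriv_scaledQuartic] at h'
  have hdiscr := quarticDiscr_scaledQuartic n α
  rw [quarticDiscr_eq_zero_of_double_root (x := x) (by linear_combination h)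
    (by linear_combination h')] at hdiscr
  have hn1 : (n : ℝ) - 1 ≠ 0 := sub_ne_zero.2 (by exact_mod_cast hn)
  have : 432 * ((n : ℝ) - 1) * α ≠ 0 := by positivity
  exact (mul_eq_zero.1 hdiscr.symm).resolve_left this

/-- For every integer `m ≥ 2` there exists an algebraic number `α_m ∈ (2/m, 12/m)`, a root of
`𝐩_m`, such that for every `α ≥ α_m` there is `γ ∈ (0, 1 − 1/(m+α))` with `P_{m,α}(γ) ≥ 0`. -/
theorem main_lemma (m : ℕ) (hm : 2 ≤ m) :
    ∃ αm : ℝ, 2 / (m : ℝ) < αm ∧ αm < 12 / (m : ℝ) ∧ pm m αm = 0 ∧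
      ∀ α : ℝ, αm ≤ α →
        ∃ γ : ℝ, 0 < γ ∧ γ < 1 - 1 / ((m : ℝ) + α) ∧ Pquartic m α γ ≥ 0 := by
  have hm' : (2 : ℝ) ≤ m := by exact_mod_cast hm
  obtain ⟨αm, ⟨hlow, hup⟩, x, hx, hroot, hderiv⟩ := exists_double_root_scaledQuartic hm'
  have hαm : 0 < αm := lt_trans (by positivity) hlow
  refine ⟨αm, hlow, hup, pm_eq_zero_of_double_root (by omega) hαm.ne' hroot hderiv,
    fun α hα => ?_⟩
  have hsum : 0 < (m : ℝ) + α := by linarith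
  refine ⟨x / (m + α), ?_, ?_, ?_⟩
  · exact div_pos hx.1 hsum
  · rw [one_sub_div hsum.ne']
    gcongr
    linarith [hx.2]
  · rw [Pquartic_div m hsum.ne']
    exact div_nonneg (scaledQuartic_nonneg_of_le (by linarith) hαm (Ioo_subset_Icc_self hx)
      hroot.ge hα) hsum.le
end

section
/- Let m ≥ 2 be an integer and let α > 2/m be a real number. If 𝐩_m(α) ≥ 0, then there exists γ with 0 < γ < 1 − 1/(m+α) and P_{m,α}(γ) ≥ 0. -/
/-!
Put `s = m + α`, `k = (m - 1) α` and `γ = x / s`. Then `s P(γ)` becomes the monic quartic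
`Q(x) = x (x - (s - 1)) ((x - 1)² - 4k) - 8k (s - x)`, whose discriminant is `16 k 𝐩_m(α)`.
It has a root `r₁ < 0` and a root `r₂ > s - 1`, so when its discriminant is nonnegative it has a
third real root `t`. Were `t < 0`, the divided difference of `Q` at `r₁` and `t` would vanish, but
it is negative; were `t > s - 1`, the one at `r₂` and `t` would vanish, but it is positive.
Working with divided differences excludes a further root and a double root at one stroke.
-/

/-- The monic quartic `X⁴ + b X³ + c X² + d X + e`, encoded by its coefficients so that its
discriminant is an explicit expression, in the manner of `Cubic`. -/
@[ext]
structure MonicQuartic (R : Type*) where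
  (b c d e : R)

namespace MonicQuartic

section CommRing

variable {R : Type*} [CommRing R]

/-- The value of the quartic at `x`. -/
def eval (f : MonicQuartic R) (x : R) : R :=
  x ^ 4 + f.b * x ^ 3 + f.c * x ^ 2 + f.d * x + f.e

/-- The divided difference `(f(x) - f(y)) / (x - y)`, extended polynomially to `x = y`, where it
is the derivative. If `x` is a root, then `f.divDiff x` evaluates the cofactor of `X - x`. -/
def divDiff (f : MonicQuartic R) (x y : R) : R :=
  x ^ 3 + x ^ 2 * y + x * y ^ 2 + y ^ 3 + f.b * (x ^ 2 + x * y + y ^ 2) + f.c * (x + y) + f.d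

/-- The discriminant of the quartic. -/
def discr (f : MonicQuartic R) : R :=
  256 * f.e ^ 3 - 192 * f.b * f.d * f.e ^ 2 - 128 * f.c ^ 2 * f.e ^ 2
    + 144 * f.c * f.d ^ 2 * f.e - 27 * f.d ^ 4 + 144 * f.b ^ 2 * f.c * f.e ^ 2
    - 6 * f.b ^ 2 * f.d ^ 2 * f.e - 80 * f.b * f.c ^ 2 * f.d * f.e + 18 * f.b * f.c * f.d ^ 3
    + 16 * f.c ^ 4 * f.e - 4 * f.c ^ 3 * f.d ^ 2 - 27 * f.b ^ 4 * f.e ^ 2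
    + 18 * f.b ^ 3 * f.c * f.d * f.e - 4 * f.b ^ 3 * f.d ^ 3 - 4 * f.b ^ 2 * f.c ^ 3 * f.e
    + f.b ^ 2 * f.c ^ 2 * f.d ^ 2

/-- The product `(X - r₁) (X - r₂) (X² + p X + q)`. -/
def ofRootsMulQuadratic (r₁ r₂ p q : R) : MonicQuartic R where
  b := p - (r₁ + r₂)
  c := q - (r₁ + r₂) * p + r₁ * r₂
  d := r₁ * r₂ * p - (r₁ + r₂) * q
  e := r₁ * r₂ * q

lemma eval_sub_eval (f : MonicQuartic R) (x y : R) :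
    f.eval x - f.eval y = (x - y) * f.divDiff x y := by
  simp only [eval, divDiff]
  ring

lemma divDiff_ofRootsMulQuadratic_left (r₁ r₂ p q x : R) :
    (ofRootsMulQuadratic r₁ r₂ p q).divDiff r₁ x = (x - r₂) * (x ^ 2 + p * x + q) := by
  simp only [divDiff, ofRootsMulQuadratic]
  ring

lemma divDiff_ofRootsMulQuadratic_right (r₁ r₂ p q x : R) :
    (ofRootsMulQuadratic r₁ r₂ p q).divDiff r₂ x = (x - r₁) * (x ^ 2 + p * x + q) := by
  simp only [divDiff, ofRootsMulQuadratic]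
  ring

lemma discr_ofRootsMulQuadratic (r₁ r₂ p q : R) :
    (ofRootsMulQuadratic r₁ r₂ p q).discr =
      ((r₁ - r₂) * ((r₁ ^ 2 + p * r₁ + q) * (r₂ ^ 2 + p * r₂ + q))) ^ 2 * discrim 1 p q := by
  simp only [discr, ofRootsMulQuadratic, discrim]
  ring

lemma exists_eq_ofRootsMulQuadratic [IsDomain R] {f : MonicQuartic R} {r₁ r₂ : R}
    (hne : r₁ ≠ r₂) (h₁ : f.eval r₁ = 0) (h₂ : f.eval r₂ = 0) :
    ∃ p q : R, f = ofRootsMulQuadratic r₁ r₂ p q := by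
  have hdiff : f.divDiff r₁ r₂ = 0 := by
    have h := f.eval_sub_eval r₁ r₂
    rw [h₁, h₂, sub_zero] at h
    exact (mul_eq_zero.1 h.symm).resolve_left (sub_ne_zero.2 hne)
  simp only [eval, divDiff] at h₁ hdiff
  refine ⟨f.b + (r₁ + r₂), f.c + (r₁ + r₂) * (f.b + (r₁ + r₂)) - r₁ * r₂, ?_⟩
  ext <;> simp only [ofRootsMulQuadratic]
  · ring
  · ring
  · linear_combination hdiff
  · linear_combination h₁ - r₁ * hdiff

end CommRing

lemma continuous_eval (f : MonicQuartic ℝ) : Continuous f.eval := by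
  unfold eval
  fun_prop

/-- Vanishing divided differences say that `t` is a third root counted with multiplicity: it may
coincide with `r₁` or `r₂`, which is then a multiple root. -/
theorem exists_divDiff_eq_zero_of_discr_nonneg {f : MonicQuartic ℝ} {r₁ r₂ : ℝ} (hne : r₁ ≠ r₂)
    (h₁ : f.eval r₁ = 0) (h₂ : f.eval r₂ = 0) (hdiscr : 0 ≤ f.discr) :
    ∃ t : ℝ, f.divDiff r₁ t = 0 ∧ f.divDiff r₂ t = 0 := by
  obtain ⟨p, q, rfl⟩ := exists_eq_ofRootsMulQuadratic hne h₁ h₂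
  suffices ∃ t : ℝ, t ^ 2 + p * t + q = 0 by
    obtain ⟨t, ht⟩ := this
    exact ⟨t, by rw [divDiff_ofRootsMulQuadratic_left, ht, mul_zero],
      by rw [divDiff_ofRootsMulQuadratic_right, ht, mul_zero]⟩
  by_contra! hroot
  have hsq : 0 < ((r₁ - r₂) * ((r₁ ^ 2 + p * r₁ + q) * (r₂ ^ 2 + p * r₂ + q))) ^ 2 :=
    sq_pos_of_ne_zero
      (mul_ne_zero (sub_ne_zero.2 hne) (mul_ne_zero (hroot r₁) (hroot r₂)))
  rw [discr_ofRootsMulQuadratic] at hdiscr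
  have hdiscrim : 0 ≤ discrim 1 p q := nonneg_of_mul_nonneg_right hdiscr hsq
  obtain ⟨t, ht⟩ := exists_quadratic_eq_zero one_ne_zero
    ⟨√(discrim 1 p q), (Real.mul_self_sqrt hdiscrim).symm⟩
  exact hroot t (by linear_combination ht)

end MonicQuartic

/-- The quartic `x (x - (s - 1)) ((x - 1)² - 4k) - 8k (s - x)`, which for `s = m + α` and
`k = (m - 1) α` is `s P_{m,α}(x / s)`. -/
def reducedQuartic (s k : ℝ) : MonicQuartic ℝ where
  b := -(s + 1)
  c := 2 * s - 1 - 4 * k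
  d := 4 * k * (s + 1) - (s - 1)
  e := -8 * k * s

namespace reducedQuartic

lemma eval_eq (s k x : ℝ) :
    (reducedQuartic s k).eval x =
      x * (x - (s - 1)) * ((x - 1) ^ 2 - 4 * k) - 8 * k * (s - x) := by
  simp only [MonicQuartic.eval, reducedQuartic]
  ring

lemma divDiff_eq (s k x y : ℝ) :
    (reducedQuartic s k).divDiff x y =
      (x + y - (s - 1)) * ((x - 1) ^ 2 - 4 * k) + y * (y - (s - 1)) * (x + y - 2) + 8 * k := by
  simp only [MonicQuartic.divDiff, reducedQuartic]
  ring

lemma discr_eq_mul_pm (m : ℕ) (α : ℝ) :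
    (reducedQuartic (m + α) ((m - 1) * α)).discr = 16 * ((m - 1) * α) * pm m α := by
  simp only [MonicQuartic.discr, reducedQuartic, pm]
  ring

lemma eval_eq_mul_Pquartic (m : ℕ) {α : ℝ} (h : (m : ℝ) + α ≠ 0) (x : ℝ) :
    (reducedQuartic (m + α) ((m - 1) * α)).eval x = (m + α) * Pquartic m α (x / (m + α)) := by
  obtain ⟨γ, rfl⟩ : ∃ γ, x = (m + α) * γ := ⟨x / (m + α), (mul_div_cancel₀ x h).symm⟩
  rw [mul_div_cancel_left₀ γ h, eval_eq, Pquartic]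
  ring

section Roots

variable {s k x y : ℝ}

lemma eval_zero_neg (hs : 0 < s) (hk : 0 < k) : (reducedQuartic s k).eval 0 < 0 := by
  have hks : 0 < k * s := mul_pos hk hs
  rw [eval_eq]
  linarith

lemma eval_sub_one_neg (hk : 0 < k) : (reducedQuartic s k).eval (s - 1) < 0 := by
  rw [eval_eq]
  linarith

lemma eval_neg_self_pos (hs : 1 < s) (hsk : 4 * k ≤ (s - 1) ^ 2) :
    0 < (reducedQuartic s k).eval (-s) := by
  have hprod : 0 ≤ (2 * s - 1) * ((s - 1) ^ 2 - 4 * k) :=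
    mul_nonneg (by linarith) (sub_nonneg.2 hsk)
  have hfactor : (reducedQuartic s k).eval (-s) = s * ((2 * s - 1) * ((s - 1) ^ 2 - 4 * k)
      + 4 * ((s - 1) ^ 2 - 4 * k) + 4 * s ^ 2 + 4 * (s - 1)) := by
    rw [eval_eq]
    ring
  rw [hfactor]
  have : 0 < s ^ 2 := by positivity
  exact mul_pos (by linarith) (by linarith)

lemma eval_self_nonneg (hs : 0 ≤ s) (hsk : 4 * k ≤ (s - 1) ^ 2) :
    0 ≤ (reducedQuartic s k).eval s := by
  have hfactor : (reducedQuartic s k).eval s = s * ((s - 1) ^ 2 - 4 * k) := by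
    rw [eval_eq]
    ring
  rw [hfactor]
  exact mul_nonneg hs (sub_nonneg.2 hsk)

lemma exists_neg_root (hs : 1 < s) (hk : 0 < k) (hsk : 4 * k ≤ (s - 1) ^ 2) :
    ∃ r < 0, (reducedQuartic s k).eval r = 0 := by
  obtain ⟨r, hr, hroot⟩ := intermediate_value_Ioo' (by linarith : -s ≤ 0)
    (MonicQuartic.continuous_eval _).continuousOn
    ⟨eval_zero_neg (by linarith) hk, eval_neg_self_pos hs hsk⟩
  exact ⟨r, hr.2, hroot⟩

lemma exists_root_mem_Ioc (hs : 0 ≤ s) (hk : 0 < k) (hsk : 4 * k ≤ (s - 1) ^ 2) :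
    ∃ r ∈ Set.Ioc (s - 1) s, (reducedQuartic s k).eval r = 0 :=
  intermediate_value_Ioc (by linarith) (MonicQuartic.continuous_eval _).continuousOn
    ⟨eval_sub_one_neg hk, eval_self_nonneg hs hsk⟩

lemma four_mul_lt_sq_of_neg_root (hs : 1 < s) (hk : 0 < k) (hx : x < 0)
    (hroot : (reducedQuartic s k).eval x = 0) : 4 * k < (x - 1) ^ 2 := by
  rw [eval_eq, sub_eq_zero] at hroot
  have hcoeff : 0 < x * (x - (s - 1)) := mul_pos_of_neg_of_neg hx (by linarith)
  have hrhs : 0 < 8 * k * (s - x) := mul_pos (by linarith) (by linarith)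
  exact sub_pos.1 (pos_of_mul_pos_right (hroot ▸ hrhs) hcoeff.le)

lemma four_mul_le_sq_of_root_mem_Ioc (hs : 1 ≤ s) (hk : 0 ≤ k) (hx : x ∈ Set.Ioc (s - 1) s)
    (hroot : (reducedQuartic s k).eval x = 0) : 4 * k ≤ (x - 1) ^ 2 := by
  rw [eval_eq, sub_eq_zero] at hroot
  have hcoeff : 0 < x * (x - (s - 1)) := mul_pos (by linarith [hx.1]) (sub_pos.2 hx.1)
  have hrhs : 0 ≤ 8 * k * (s - x) := mul_nonneg (by linarith) (sub_nonneg.2 hx.2)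
  exact sub_nonneg.1 (nonneg_of_mul_nonneg_right (hroot ▸ hrhs) hcoeff)

lemma divDiff_neg_of_neg_roots (hs : 1 < s) (hk : 0 < k) (hx : x < 0) (hy : y < 0)
    (hxroot : (reducedQuartic s k).eval x = 0) (hyroot : (reducedQuartic s k).eval y = 0) :
    (reducedQuartic s k).divDiff x y < 0 := by
  have hW : 0 < (x - 1) ^ 2 - 4 * k := sub_pos.2 (four_mul_lt_sq_of_neg_root hs hk hx hxroot)
  -- The right-hand side is `(s - x) (s - y)` times the divided difference of
  -- `Q(x) / (s - x) = x (x - (s - 1)) / (s - x) * ((x - 1) ^ 2 - 4 k) - 8 k`, in which both factors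
  -- decrease for `x < 0`.
  have hidentity : (s - y) * (reducedQuartic s k).divDiff x y + (reducedQuartic s k).eval y =
      ((x + y) * s - x * y - s * (s - 1)) * ((x - 1) ^ 2 - 4 * k)
        + y * (y - (s - 1)) * (s - x) * (x + y - 2) := by
    rw [divDiff_eq, eval_eq]
    ring
  have hfirst : (x + y) * s - x * y - s * (s - 1) < 0 := by
    have hsum : (x + y) * s < 0 := mul_neg_of_neg_of_pos (by linarith) (by linarith)
    have hxy : 0 < x * y := mul_pos_of_neg_of_neg hx hy
    have hss : 0 < s * (s - 1) := mul_pos (by linarith) (by linarith)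
    linarith
  have hsecond : 0 < y * (y - (s - 1)) * (s - x) :=
    mul_pos (mul_pos_of_neg_of_neg hy (by linarith)) (by linarith)
  have hmul : (s - y) * (reducedQuartic s k).divDiff x y < 0 := by
    rw [hyroot, add_zero] at hidentity
    rw [hidentity]
    exact add_neg (mul_neg_of_neg_of_pos hfirst hW)
      (mul_neg_of_pos_of_neg hsecond (by linarith))
  exact neg_of_mul_neg_right hmul (by linarith)

lemma divDiff_pos_of_root_mem_Ioc (hs : 2 ≤ s) (hk : 0 < k) (hx : x ∈ Set.Ioc (s - 1) s)
    (hy : s - 1 < y) (hxroot : (reducedQuartic s k).eval x = 0) :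
    0 < (reducedQuartic s k).divDiff x y := by
  have hx1 : s - 1 < x := hx.1
  have hW : 0 ≤ (x - 1) ^ 2 - 4 * k :=
    sub_nonneg.2 (four_mul_le_sq_of_root_mem_Ioc (by linarith) hk.le hx hxroot)
  have hfirst : 0 ≤ (x + y - (s - 1)) * ((x - 1) ^ 2 - 4 * k) := mul_nonneg (by linarith) hW
  have hsecond : 0 ≤ y * (y - (s - 1)) * (x + y - 2) :=
    mul_nonneg (mul_nonneg (by linarith) (by linarith)) (by linarith)
  rw [divDiff_eq]
  linarith

theorem exists_root_mem_Ioo_of_discr_nonneg (hs : 2 ≤ s) (hk : 0 < k)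
    (hsk : 4 * k ≤ (s - 1) ^ 2) (hdiscr : 0 ≤ (reducedQuartic s k).discr) :
    ∃ t ∈ Set.Ioo 0 (s - 1), (reducedQuartic s k).eval t = 0 := by
  have hs1 : 1 < s := by linarith
  obtain ⟨r₁, hr₁, h₁⟩ := exists_neg_root hs1 hk hsk
  obtain ⟨r₂, hr₂, h₂⟩ := exists_root_mem_Ioc (by linarith) hk hsk
  have hne : r₁ ≠ r₂ := by linarith [hr₂.1]
  obtain ⟨t, ht₁, ht₂⟩ := MonicQuartic.exists_divDiff_eq_zero_of_discr_nonneg hne h₁ h₂ hdiscr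
  have ht : (reducedQuartic s k).eval t = 0 := by
    have h := MonicQuartic.eval_sub_eval (reducedQuartic s k) r₁ t
    rwa [h₁, ht₁, mul_zero, zero_sub, neg_eq_zero] at h
  have ht_nonneg : 0 ≤ t := by
    by_contra! htneg
    exact (divDiff_neg_of_neg_roots hs1 hk hr₁ htneg h₁ ht).ne ht₁
  have ht_le : t ≤ s - 1 := by
    by_contra! hlt
    exact (divDiff_pos_of_root_mem_Ioc hs hk hr₂ hlt h₂).ne' ht₂
  refine ⟨t, ⟨ht_nonneg.lt_of_ne ?_, ht_le.lt_of_ne ?_⟩, ht⟩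
  · rintro rfl
    exact (eval_zero_neg (by linarith) hk).ne ht
  · rintro rfl
    exact (eval_sub_one_neg hk).ne ht

end Roots

end reducedQuartic

theorem gamma_exists_of_pm_nonneg_general (m : ℕ) (hm : 2 ≤ m) (α : ℝ) (hα : 0 < α)
    (hpm : 0 ≤ pm m α) :
    ∃ γ : ℝ, 0 < γ ∧ γ < 1 - 1 / ((m : ℝ) + α) ∧ Pquartic m α γ = 0 := by
  have hm2 : (2 : ℝ) ≤ m := by exact_mod_cast hm
  have hs : 0 < (m : ℝ) + α := by linarith
  have hk : 0 < ((m : ℝ) - 1) * α := mul_pos (by linarith) hα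
  have hsk : 4 * (((m : ℝ) - 1) * α) ≤ (m + α - 1) ^ 2 := by
    linarith [four_mul_le_sq_add ((m : ℝ) - 1) α]
  have hdiscr : 0 ≤ (reducedQuartic (m + α) ((m - 1) * α)).discr := by
    rw [reducedQuartic.discr_eq_mul_pm]
    exact mul_nonneg (by linarith) hpm
  obtain ⟨x, ⟨hx0, hxs⟩, hx⟩ :=
    reducedQuartic.exists_root_mem_Ioo_of_discr_nonneg (by linarith) hk hsk hdiscr
  rw [reducedQuartic.eval_eq_mul_Pquartic m hs.ne'] at hx
  refine ⟨x / (m + α), div_pos hx0 hs, ?_, (mul_eq_zero.1 hx).resolve_left hs.ne'⟩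
  rw [one_sub_div hs.ne']
  exact div_lt_div_of_pos_right hxs hs

/-- For `m ≥ 2` and `α > 2/m`, if `𝐩_m(α) ≥ 0` then there exists `γ ∈ (0, 1 − 1/(m+α))`
with `P_{m,α}(γ) ≥ 0`. -/
theorem gamma_exists_of_pm_nonneg (m : ℕ) (hm : 2 ≤ m) (α : ℝ) (hα : 2 / (m : ℝ) < α)
    (hpm : pm m α ≥ 0) :
    ∃ γ : ℝ, 0 < γ ∧ γ < 1 - 1 / ((m : ℝ) + α) ∧ Pquartic m α γ ≥ 0 := by
  have hα0 : 0 < α := lt_of_le_of_lt (by positivity) hα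
  obtain ⟨γ, hγ0, hγ1, hγ⟩ := gamma_exists_of_pm_nonneg_general m hm α hα0 hpm
  exact ⟨γ, hγ0, hγ1, hγ.ge⟩
end

section
/- For every integer m ≥ 2, the polynomial 𝐩_m has exactly one positive real root, i.e., there exists a unique α > 0 with 𝐩_m(α) = 0. -/
/-!
A differentiable function `f` that is negative somewhere on `(0, c)` and positive on `[c, ∞)` has
exactly one positive root as soon as `k f(x) < x f'(x)` on `(0, c)`, because then `f(x) / x ^ k` is
strictly increasing there. For `𝐩_m`, with a real parameter `m ≥ 2`, this applies with
`(k, c) = (5, 6)` on `2 ≤ m < 4`, `(3, 3)` on `4 ≤ m < 7` and `(1, 3)` on `7 ≤ m`; these values were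
found numerically. Every polynomial inequality needed is certified by writing `m` and `α` as
rational functions of nonnegative parameters for which, after clearing denominators, no negative
coefficient remains.
-/

open Polynomial Set

section RootCounting

variable {f f' : ℝ → ℝ}

lemma strictMonoOn_div_pow {s : Set ℝ} (hs : Convex ℝ s) (hs0 : s ⊆ Ioi 0) (k : ℕ)
    (hf : ∀ x ∈ s, HasDerivAt f (f' x) x) (hlt : ∀ x ∈ s, k * f x < x * f' x) :
    StrictMonoOn (fun x => f x / x ^ k) s := by
  have hderiv : ∀ x ∈ s, HasDerivAt (fun x => f x / x ^ k)
      ((x * f' x - k * f x) / x ^ (k + 1)) x := by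
    intro x hx
    have hx0 : x ≠ 0 := (hs0 hx).ne'
    refine ((hf x hx).fun_div (hasDerivAt_pow k x) (pow_ne_zero k hx0)).congr_deriv ?_
    rcases k with _ | k
    · simp [hx0]
    · rw [Nat.add_sub_cancel]
      field_simp
      ring
  refine strictMonoOn_of_deriv_pos hs
    (fun x hx => (hderiv x hx).continuousAt.continuousWithinAt) fun x hx => ?_
  rw [(hderiv x (interior_subset hx)).deriv]
  exact div_pos (sub_pos.2 (hlt x (interior_subset hx))) (pow_pos (hs0 (interior_subset hx)) _)

lemma existsUnique_pos_root {c e : ℝ} (k : ℕ) (he : e ∈ Ioo 0 c)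
    (hf : ∀ x, 0 < x → HasDerivAt f (f' x) x) (hneg : f e < 0) (hpos : ∀ x, c ≤ x → 0 < f x)
    (hlt : ∀ x ∈ Ioo 0 c, k * f x < x * f' x) : ∃! x, 0 < x ∧ f x = 0 := by
  have hcont : ContinuousOn f (Icc e c) := fun x hx =>
    (hf x (he.1.trans_le hx.1)).continuousAt.continuousWithinAt
  obtain ⟨r, hr, hfr⟩ := intermediate_value_Ioo he.2.le hcont ⟨hneg, hpos c le_rfl⟩
  have hr0 : 0 < r := he.1.trans hr.1
  refine ⟨r, ⟨hr0, hfr⟩, fun x ⟨hx0, hfx⟩ => ?_⟩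
  have hxc : x < c := lt_of_not_ge fun hcx => (hpos x hcx).ne' hfx
  have hmono := strictMonoOn_div_pow (convex_Ioo 0 c) (fun x hx => hx.1) k
    (fun x hx => hf x hx.1) hlt
  exact hmono.injOn ⟨hx0, hxc⟩ ⟨hr0, hr.2⟩ (by simp only [hfx, hfr, zero_div])

end RootCounting

lemma mul_eval_derivative_sub_mul_eval {R : Type*} [CommRing R] (a : ℕ → R) (n : ℕ) (x k : R) :
    x * (derivative (∑ i ∈ Finset.range n, C (a i) * X ^ i)).eval x
        - k * (∑ i ∈ Finset.range n, C (a i) * X ^ i).eval x =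
      ∑ i ∈ Finset.range n, (i - k) * a i * x ^ i := by
  rw [derivative_sum, eval_finsetSum, eval_finsetSum, Finset.mul_sum, Finset.mul_sum,
    ← Finset.sum_sub_distrib]
  refine Finset.sum_congr rfl fun i _ => ?_
  rw [derivative_C_mul_X_pow, eval_mul, eval_mul, eval_C, eval_C, eval_pow, eval_pow, eval_X]
  rcases i with _ | i
  · simp
  · rw [Nat.add_sub_cancel]
    ring

section Parametrization

variable {K : Type*} [Field K] [LinearOrder K] [IsStrictOrderedRing K] {a b c x : K}

lemma exists_nonneg_eq_div_one_add (hx : x ∈ Ico a b) :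
    ∃ y, 0 ≤ y ∧ x = (a + b * y) / (1 + y) := by
  have hxb : 0 < b - x := sub_pos.2 hx.2
  have hab : 0 < b - a := sub_pos.2 (hx.1.trans_lt hx.2)
  have hden : 1 + (x - a) / (b - x) = (b - a) / (b - x) := by
    field_simp
    ring
  refine ⟨(x - a) / (b - x), div_nonneg (sub_nonneg.2 hx.1) hxb.le, ?_⟩
  rw [hden, eq_div_iff (div_pos hab hxb).ne']
  field_simp
  ring

lemma exists_pos_eq_mul_div_one_add (hx : x ∈ Ioo 0 c) :
    ∃ y, 0 < y ∧ x = c * y / (1 + y) := by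
  obtain ⟨y, hy, hxy⟩ := exists_nonneg_eq_div_one_add (Ioo_subset_Ico_self hx)
  rw [zero_add] at hxy
  refine ⟨y, hy.lt_of_ne ?_, hxy⟩
  rintro rfl
  simp [hxy] at hx

end Parametrization

/-- The coefficient of `α ^ i` in `𝐩_m(α)`, with `m` a real parameter. -/
noncomputable def pmCoeff (m : ℝ) : ℕ → ℝ
  | 0 => -((m - 2) ^ 3 * (m - 1) ^ 2 * m)
  | 1 => -(2 * (m - 1) * (22 * m ^ 6 - 148 * m ^ 5 + 363 * m ^ 4 - 381 * m ^ 3 + 185 * m ^ 2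
      - 60 * m + 2))
  | 2 => 16 * m ^ 8 - 192 * m ^ 7 + 984 * m ^ 6 - 2864 * m ^ 5 + 1001 * m ^ 4 + 4184 * m ^ 3
      - 3870 * m ^ 2 + 794 * m - 52
  | 3 => -(2 * (16 * m ^ 7 - 208 * m ^ 6 + 250 * m ^ 5 + 2302 * m ^ 4 - 3214 * m ^ 3
      - 588 * m ^ 2 + 1566 * m - 123))
  | 4 => -((m - 1) * (16 * m ^ 5 + 48 * m ^ 4 - 1712 * m ^ 3 + 6672 * m ^ 2 - 4321 * m - 641))
  | 5 => 2 * (32 * m ^ 5 - 224 * m ^ 4 + 1238 * m ^ 3 - 2738 * m ^ 2 + 2545 * m - 852)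
  | 6 => -(16 * m ^ 4 - 256 * m ^ 3 + 584 * m ^ 2 - 496 * m + 153)
  | 7 => -(4 * (m - 1) * (8 * m ^ 2 + 3))
  | 8 => 16 * (m - 1) ^ 2
  | _ => 0

/-- The polynomial `𝐩_m` as an element of `ℝ[X]`, with `m` a real parameter. -/
noncomputable def pmPoly (m : ℝ) : ℝ[X] :=
  ∑ i ∈ Finset.range 9, C (pmCoeff m i) * X ^ i

lemma eval_pmPoly (m x : ℝ) :
    (pmPoly m).eval x = ∑ i ∈ Finset.range 9, pmCoeff m i * x ^ i := by
  simp only [pmPoly, eval_finsetSum, eval_mul, eval_C, eval_pow, eval_X]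

lemma eval_pmPoly_natCast (m : ℕ) (α : ℝ) : (pmPoly m).eval α = pm m α := by
  simp only [eval_pmPoly, Finset.sum_range_succ, Finset.sum_range_zero, pmCoeff, pm]
  ring

section Certificates

variable {m x : ℝ}

lemma eval_pmPoly_one_div_neg (hm : 2 ≤ m) : (pmPoly m).eval (1 / m) < 0 := by
  obtain ⟨n, hn, rfl⟩ := exists_nonneg_add_of_le hm
  rw [← neg_pos]
  simp only [eval_pmPoly, Finset.sum_range_succ, Finset.sum_range_zero, pmCoeff]
  field_simp
  ring_nf
  positivity

lemma eval_pmPoly_pos_of_six_le (hm : m ∈ Ico 2 4) (hx : 6 ≤ x) : 0 < (pmPoly m).eval x := by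
  obtain ⟨t, ht, rfl⟩ := exists_nonneg_eq_div_one_add hm
  obtain ⟨s, hs, rfl⟩ := exists_nonneg_add_of_le hx
  simp only [eval_pmPoly, Finset.sum_range_succ, Finset.sum_range_zero, pmCoeff]
  field_simp
  ring_nf
  positivity

/- The leading form of `𝐩_m(α)` in `(m, α)` is `16 m² α² (m - α)⁴ (m + α)²`. It vanishes along
`α = m`, so the two sides of a line parallel to that one are treated separately. -/
lemma eval_pmPoly_pos_of_three_le (hm : 4 ≤ m) (hx : 3 ≤ x) : 0 < (pmPoly m).eval x := by
  rcases le_total (x + 1) m with hxm | hmx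
  · obtain ⟨s, hs, rfl⟩ := exists_nonneg_add_of_le hx
    obtain ⟨t, ht, rfl⟩ := exists_nonneg_add_of_le hxm
    simp only [eval_pmPoly, Finset.sum_range_succ, Finset.sum_range_zero, pmCoeff]
    ring_nf
    positivity
  · obtain ⟨s, hs, rfl⟩ := exists_nonneg_add_of_le hm
    obtain ⟨t, ht, rfl⟩ : ∃ t, 0 ≤ t ∧ x = 3 + s + t := ⟨x - (3 + s), by linarith, by ring⟩
    simp only [eval_pmPoly, Finset.sum_range_succ, Finset.sum_range_zero, pmCoeff]
    ring_nf
    positivity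

lemma five_mul_eval_pmPoly_lt_mul_eval_derivative (hm : m ∈ Ico 2 4) (hx : x ∈ Ioo 0 6) :
    5 * (pmPoly m).eval x < x * (derivative (pmPoly m)).eval x := by
  obtain ⟨t, ht, rfl⟩ := exists_nonneg_eq_div_one_add hm
  obtain ⟨y, hy, rfl⟩ := exists_pos_eq_mul_div_one_add hx
  rw [← sub_pos, pmPoly, mul_eval_derivative_sub_mul_eval]
  simp only [Finset.sum_range_succ, Finset.sum_range_zero, pmCoeff]
  push_cast
  field_simp
  ring_nf
  positivity

lemma three_mul_eval_pmPoly_lt_mul_eval_derivative (hm : m ∈ Ico 4 7) (hx : x ∈ Ioo 0 3) :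
    3 * (pmPoly m).eval x < x * (derivative (pmPoly m)).eval x := by
  obtain ⟨t, ht, rfl⟩ := exists_nonneg_eq_div_one_add hm
  obtain ⟨y, hy, rfl⟩ := exists_pos_eq_mul_div_one_add hx
  rw [← sub_pos, pmPoly, mul_eval_derivative_sub_mul_eval]
  simp only [Finset.sum_range_succ, Finset.sum_range_zero, pmCoeff]
  push_cast
  field_simp
  ring_nf
  positivity

lemma eval_pmPoly_lt_mul_eval_derivative (hm : 7 ≤ m) (hx : x ∈ Ioo 0 3) :
    (pmPoly m).eval x < x * (derivative (pmPoly m)).eval x := by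
  obtain ⟨t, ht, rfl⟩ := exists_nonneg_add_of_le hm
  obtain ⟨y, hy, rfl⟩ := exists_pos_eq_mul_div_one_add hx
  rw [← one_mul ((pmPoly _).eval _), ← sub_pos, pmPoly, mul_eval_derivative_sub_mul_eval]
  simp only [Finset.sum_range_succ, Finset.sum_range_zero, pmCoeff]
  push_cast
  field_simp
  ring_nf
  positivity

end Certificates

theorem pm_unique_positive_root_general {m : ℝ} (hm : 2 ≤ m) :
    ∃! α : ℝ, 0 < α ∧ (pmPoly m).eval α = 0 := by
  have hderiv : ∀ x, 0 < x → HasDerivAt (pmPoly m).eval ((derivative (pmPoly m)).eval x) x :=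
    fun x _ => (pmPoly m).hasDerivAt x
  have hm0 : 0 < 1 / m := by positivity
  have hm3 : 1 / m < 3 := by
    rw [div_lt_iff₀ (by linarith)]
    linarith
  have hneg := eval_pmPoly_one_div_neg hm
  rcases lt_or_ge m 4 with hm4 | hm4
  · exact existsUnique_pos_root 5 ⟨hm0, hm3.trans (by norm_num)⟩ hderiv hneg
      (fun _ => eval_pmPoly_pos_of_six_le ⟨hm, hm4⟩)
      (fun _ => five_mul_eval_pmPoly_lt_mul_eval_derivative ⟨hm, hm4⟩)
  have hpos : ∀ x, 3 ≤ x → 0 < (pmPoly m).eval x := fun _ => eval_pmPoly_pos_of_three_le hm4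
  rcases lt_or_ge m 7 with hm7 | hm7
  · exact existsUnique_pos_root 3 ⟨hm0, hm3⟩ hderiv hneg hpos
      (fun _ => three_mul_eval_pmPoly_lt_mul_eval_derivative ⟨hm4, hm7⟩)
  · exact existsUnique_pos_root 1 ⟨hm0, hm3⟩ hderiv hneg hpos
      (fun x hx => by simpa using eval_pmPoly_lt_mul_eval_derivative hm7 hx)

/-- For every integer `m ≥ 2`, the polynomial `𝐩_m` has exactly one positive real root. -/
theorem pm_unique_positive_root (m : ℕ) (hm : 2 ≤ m) :
    ∃! α : ℝ, 0 < α ∧ pm m α = 0 := by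
  simpa only [eval_pmPoly_natCast] using pm_unique_positive_root_general (Nat.ofNat_le_cast.2 hm)
end
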